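/- arXiv:1003.4121 — 2 statements merged into one kernel-verified Lean document; each statement's English description precedes it below -/
import Mathlib

section
/- Let n ≥ 3 be an integer and let p be a real number with 1 < p < n/(n-2). Define σ(x) = p(n+2) / (2·(x·(2p - pn + n) + np)) for x > 0. Then there exists θ ∈ (0,1) such that for every real r > 1 and every natural number k, σ(2^k · r) ≤ θ^k · σ(r). (Paper's Lemma 4.2.) -/
/-!
The quotient `σ(l x) / σ(x)` equals `(x a + b) / (l x a + b)` with `a = 2p - pn + n > 0` and
`b = np`. For `l ≥ 1` it is antitone in `x > 0`: cross-multiplying its values at `x ≤ y` leaves the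
difference `(l - 1) a b (y - x) ≥ 0`. Hence on `[r₀, ∞)`, which `x ↦ l x` preserves, it is at most
its value `θ` at `r₀`; for `l > 1` we have `θ < 1`, and the bound can be iterated.
-/

open Set Function

theorem antitoneOn_affine_div_affine_dilate {K : Type*} [Field K] [LinearOrder K]
    [IsStrictOrderedRing K] {a b l : K} (ha : 0 < a) (hb : 0 ≤ b) (hl : 1 ≤ l) :
    AntitoneOn (fun x ↦ (x * a + b) / (l * x * a + b)) (Ioi 0) := by
  intro x hx y hy hxy
  have hl₀ : 0 < l := zero_lt_one.trans_le hl
  have denom_pos : ∀ z ∈ Ioi (0 : K), 0 < l * z * a + b := fun z hz ↦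
    add_pos_of_pos_of_nonneg (mul_pos (mul_pos hl₀ hz) ha) hb
  have cross_difference_nonneg : 0 ≤ (l - 1) * (a * b) * (y - x) :=
    mul_nonneg (mul_nonneg (sub_nonneg.2 hl) (mul_nonneg ha.le hb)) (sub_nonneg.2 hxy)
  rw [div_le_div_iff₀ (denom_pos y hy) (denom_pos x hx)]
  linear_combination cross_difference_nonneg

theorem div_affine_dilate_le {K : Type*} [Field K] [LinearOrder K] [IsStrictOrderedRing K]
    {a b c l x₀ x : K} (ha : 0 < a) (hb : 0 ≤ b) (hc : 0 ≤ c) (hl : 1 ≤ l) (hx₀ : 0 < x₀)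
    (hx : x₀ ≤ x) :
    c / (l * x * a + b) ≤ (x₀ * a + b) / (l * x₀ * a + b) * (c / (x * a + b)) := by
  have hx_pos : 0 < x := hx₀.trans_le hx
  calc c / (l * x * a + b)
      = (x * a + b) / (l * x * a + b) * (c / (x * a + b)) := by field_simp
    _ ≤ (x₀ * a + b) / (l * x₀ * a + b) * (c / (x * a + b)) := by
        gcongr ?_ * _
        exact antitoneOn_affine_div_affine_dilate ha hb hl hx₀ hx_pos hx

theorem apply_iterate_le_pow_mul {α : Type*} {f : α → ℝ} {g : α → α} {s : Set α} {θ : ℝ}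
    (hθ : 0 ≤ θ) (hg : MapsTo g s s) (hf : ∀ x ∈ s, f (g x) ≤ θ * f x) {x : α} (hx : x ∈ s)
    (k : ℕ) : f (g^[k] x) ≤ θ ^ k * f x :=
  le_geom (u := fun j ↦ f (g^[j] x)) hθ k fun j _ ↦ by
    simpa only [iterate_succ_apply'] using hf _ (hg.iterate j hx)

theorem exists_div_affine_pow_dilate_le {a b c l x₀ : ℝ} (ha : 0 < a) (hb : 0 ≤ b) (hc : 0 ≤ c)
    (hl : 1 < l) (hx₀ : 0 < x₀) :
    ∃ θ ∈ Ioo (0 : ℝ) 1, ∀ x, x₀ ≤ x → ∀ k : ℕ,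
      c / (l ^ k * x * a + b) ≤ θ ^ k * (c / (x * a + b)) := by
  have denom_pos : 0 < l * x₀ * a + b :=
    add_pos_of_pos_of_nonneg (mul_pos (mul_pos (zero_lt_one.trans hl) hx₀) ha) hb
  have θ_pos : 0 < (x₀ * a + b) / (l * x₀ * a + b) := div_pos (by positivity) denom_pos
  have θ_lt_one : (x₀ * a + b) / (l * x₀ * a + b) < 1 := by
    rw [div_lt_one denom_pos]
    gcongr
    exact lt_mul_of_one_lt_left hx₀ hl
  have dilate_mapsTo : MapsTo (l * ·) (Ici x₀) (Ici x₀) := fun x (hx : x₀ ≤ x) ↦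
    hx.trans (le_mul_of_one_le_left (hx₀.le.trans hx) hl.le)
  refine ⟨_, ⟨θ_pos, θ_lt_one⟩, fun x hx k ↦ ?_⟩
  simpa only [mul_left_iterate] using
    apply_iterate_le_pow_mul (f := fun y ↦ c / (y * a + b)) θ_pos.le dilate_mapsTo
      (fun y hy ↦ div_affine_dilate_le ha hb hc hl.le hx₀ hy) hx k

theorem stmt_0_general {n p l r₀ : ℝ} (hn : 0 ≤ n) (hp : 0 ≤ p) (hpn : p * (n - 2) < n)
    (hl : 1 < l) (hr₀ : 0 < r₀) (σ : ℝ → ℝ)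
    (hσ : ∀ x, σ x = p * (n + 2) / (2 * (x * (2 * p - p * n + n) + n * p))) :
    ∃ θ ∈ Ioo (0 : ℝ) 1, ∀ r, r₀ ≤ r → ∀ k : ℕ, σ (l ^ k * r) ≤ θ ^ k * σ r := by
  have slope_pos : 0 < 2 * p - p * n + n := by linarith
  have numerator_nonneg : 0 ≤ p * (n + 2) / 2 := by positivity
  simpa only [hσ, div_div] using
    exists_div_affine_pow_dilate_le slope_pos (mul_nonneg hn hp) numerator_nonneg hl hr₀

/-- Paper's Lemma 4.2: for `n ≥ 3` and `1 < p < n/(n-2)`, with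
`σ x = p(n+2)/(2(x(2p - pn + n) + np))`, there is `θ ∈ (0,1)` such that
`σ(2^k r) ≤ θ^k σ(r)` for all `r > 1` and all `k ∈ ℕ`. -/
theorem stmt_0 (n : ℕ) (hn : 3 ≤ n) (p : ℝ) (hp1 : 1 < p)
    (hp2 : p < (n : ℝ) / ((n : ℝ) - 2))
    (σ : ℝ → ℝ)
    (hσ : ∀ x : ℝ, σ x = p * ((n : ℝ) + 2) /
      (2 * (x * (2 * p - p * (n : ℝ) + (n : ℝ)) + (n : ℝ) * p))) :
    ∃ θ : ℝ, θ ∈ Set.Ioo (0 : ℝ) 1 ∧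
      ∀ r : ℝ, 1 < r → ∀ k : ℕ, σ ((2 : ℝ) ^ k * r) ≤ θ ^ k * σ r := by
  have hn₂ : (0 : ℝ) < n - 2 := sub_pos.2 (by exact_mod_cast hn)
  obtain ⟨θ, hθ, hdecay⟩ := stmt_0_general n.cast_nonneg (zero_le_one.trans hp1.le)
    ((lt_div_iff₀ hn₂).1 hp2) one_lt_two one_pos σ hσ
  exact ⟨θ, hθ, fun r hr ↦ hdecay r hr.le⟩
end

section
/- Let c₁, c₂, c₃ be positive real numbers, define σ(x) = c₁/(x·c₂ + c₃) for x > 0, and set θ = 1 - c₂/(2c₂ + c₃). Then θ ∈ (0,1) and for every real r ≥ 1 and every natural number k, σ(2^k · r) ≤ θ^k · σ(r). (Core claim in the proof of the paper's Lemma 4.2.) -/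
/-! The function `σ / σ 1` is submultiplicative on `[1, ∞)`: after clearing denominators, the gap in
`σ (x * y) * σ 1 ≤ σ x * σ y` becomes `c₂ * c₃ * (x - 1) * (y - 1)`. Since `θ = σ 2 / σ 1`, each
doubling of the argument gains a factor `θ`. -/

theorem mul_add_mul_mul_add_le {R : Type*} [CommRing R] [PartialOrder R] [IsOrderedRing R]
    {b c x y : R} (hbc : 0 ≤ b * c) (hx : 1 ≤ x) (hy : 1 ≤ y) :
    (x * b + c) * (y * b + c) ≤ (b + c) * (x * y * b + c) := by
  have gap_nonneg : 0 ≤ b * c * ((x - 1) * (y - 1)) :=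
    mul_nonneg hbc (mul_nonneg (sub_nonneg.2 hx) (sub_nonneg.2 hy))
  rw [← sub_nonneg]
  convert gap_nonneg using 1
  ring

theorem div_mul_mul_add_le {K : Type*} [Field K] [LinearOrder K] [IsStrictOrderedRing K]
    {a b c x y : K} (ha : 0 ≤ a) (hb : 0 < b) (hc : 0 ≤ c) (hx : 1 ≤ x) (hy : 1 ≤ y) :
    a / (x * y * b + c) ≤ (b + c) / (x * b + c) * (a / (y * b + c)) := by
  have denom_pos {z : K} (hz : 1 ≤ z) : 0 < z * b + c :=
    add_pos_of_pos_of_nonneg (mul_pos (one_pos.trans_le hz) hb) hc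
  rw [div_mul_div_comm, div_le_div_iff₀ (denom_pos (one_le_mul_of_one_le_of_one_le hx hy))
    (mul_pos (denom_pos hx) (denom_pos hy))]
  calc a * ((x * b + c) * (y * b + c))
      ≤ a * ((b + c) * (x * y * b + c)) :=
        mul_le_mul_of_nonneg_left (mul_add_mul_mul_add_le (mul_nonneg hb.le hc) hx hy) ha
    _ = (b + c) * a * (x * y * b + c) := by ring

theorem one_sub_div_two_mul_add {K : Type*} [Field K] {b c : K} (h : 2 * b + c ≠ 0) :
    1 - b / (2 * b + c) = (b + c) / (2 * b + c) := by
  rw [one_sub_div h]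
  ring

theorem div_pow_mul_mul_add_le {a b c x r : ℝ} (ha : 0 ≤ a) (hb : 0 < b) (hc : 0 ≤ c)
    (hx : 1 ≤ x) (hr : 1 ≤ r) (k : ℕ) :
    a / (x ^ k * r * b + c) ≤ ((b + c) / (x * b + c)) ^ k * (a / (r * b + c)) := by
  have ratio_nonneg : 0 ≤ (b + c) / (x * b + c) := by positivity
  have mul_decay (n : ℕ) : a / (x ^ (n + 1) * r * b + c) ≤
      (b + c) / (x * b + c) * (a / (x ^ n * r * b + c)) := by
    rw [pow_succ', mul_assoc x]
    exact div_mul_mul_add_le ha hb hc hx (one_le_mul_of_one_le_of_one_le (one_le_pow₀ hx) hr)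
  simpa only [pow_zero, one_mul] using
    le_geom (u := fun n ↦ a / (x ^ n * r * b + c)) ratio_nonneg k fun n _ ↦ mul_decay n

/-- Core claim in the proof of the paper's Lemma 4.2: for positive `c₁ c₂ c₃`,
`σ x = c₁/(x c₂ + c₃)` and `θ = 1 - c₂/(2c₂ + c₃)`, we have `θ ∈ (0,1)` and
`σ(2^k r) ≤ θ^k σ(r)` for every `r ≥ 1` and `k ∈ ℕ`. -/
theorem stmt_1 (c₁ c₂ c₃ : ℝ) (h₁ : 0 < c₁) (h₂ : 0 < c₂) (h₃ : 0 < c₃)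
    (σ : ℝ → ℝ) (hσ : ∀ x : ℝ, σ x = c₁ / (x * c₂ + c₃))
    (θ : ℝ) (hθ : θ = 1 - c₂ / (2 * c₂ + c₃)) :
    θ ∈ Set.Ioo (0 : ℝ) 1 ∧
      ∀ r : ℝ, 1 ≤ r → ∀ k : ℕ, σ ((2 : ℝ) ^ k * r) ≤ θ ^ k * σ r := by
  have denom_pos : 0 < 2 * c₂ + c₃ := by positivity
  rw [one_sub_div_two_mul_add denom_pos.ne'] at hθ
  subst hθ
  refine ⟨⟨by positivity, (div_lt_one denom_pos).2 (by linarith)⟩, fun r hr k ↦ ?_⟩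
  rw [hσ, hσ]
  exact div_pow_mul_mul_add_le h₁.le h₂ h₃.le one_le_two hr k
end
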